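/- Let A = {a, b, c} be a three-letter alphabet and, for n ≥ 1, let u_n = (bc)^n (a(bc)^n)^n and v_n = (bc)^n b (a(bc)^n)^n. Then: (1) the ranker X_a Y_b X_c is condensed on u_n, and it is defined but not condensed on v_n; (2) u_n and v_n agree on rankers from uR^X_{3,n}, i.e., every ranker of uR^X_{3,n} is defined on u_n if and only if it is defined on v_n; (3) the ranker X_a Y_c X_b Y_a is defined on u_n but not on v_n. -/

import Mathlib

namespace RankerPaper

variable {A : Type*} [DecidableEq A]

/-- Letters of rankers: `X a` ("next `a` to the right") and `Y a` ("next `a` to the left"). -/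
inductive RLetter (A : Type*) where
  | X : A → RLetter A
  | Y : A → RLetter A
  deriving DecidableEq

/-- Least `a`-position of `u` strictly greater than `q` (positions are 1-indexed). -/
def nextOcc (u : List A) (a : A) (q : ℕ) : Option ℕ :=
  ((List.range (u.length + 2)).filter (fun i => decide (q < i ∧ u[i-1]? = some a))).head?

/-- Greatest `a`-position of `u` strictly less than `q` (positions are 1-indexed). -/
def prevOcc (u : List A) (a : A) (q : ℕ) : Option ℕ :=
  ((List.range (u.length + 2)).filter
    (fun i => decide (1 ≤ i ∧ i < q ∧ u[i-1]? = some a))).getLast?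

/-- One evaluation step of a ranker letter from position `q`. -/
def stepR (u : List A) : RLetter A → ℕ → Option ℕ
  | .X a, q => nextOcc u a q
  | .Y a, q => prevOcc u a q

/-- Evaluation of a ranker from position `q`, processing letters left to right. -/
def evalFrom (u : List A) : List (RLetter A) → ℕ → Option ℕ
  | [], q => some q
  | z :: r, q => (stepR u z q).bind (evalFrom u r)

/-- Starting position: `0` for an `X`-letter, `|u|+1` for a `Y`-letter. -/
def startPos (u : List A) : RLetter A → ℕ
  | .X _ => 0
  | .Y _ => u.length + 1

/-- The position `r(u)` defined by the ranker `r` on `u` (`none` if undefined;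
empty rankers are considered undefined, rankers being nonempty words). -/
def evalR (u : List A) (r : List (RLetter A)) : Option ℕ :=
  match r with
  | [] => none
  | z :: t => evalFrom u (z :: t) (startPos u z)

/-- `r` is defined on `u`. -/
def Defined (u : List A) (r : List (RLetter A)) : Prop := (evalR u r).isSome

/-- The position `r(u)` (defaulting to `0` when undefined). -/
def pos (u : List A) (r : List (RLetter A)) : ℕ := (evalR u r).getD 0

/-- Do two ranker letters have the same direction? -/
def sameDir : RLetter A → RLetter A → Bool
  | .X _, .X _ => true
  | .Y _, .Y _ => true
  | _, _ => false

/-- Number of (alternating) blocks of a ranker. -/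
def numBlocks : List (RLetter A) → ℕ
  | [] => 0
  | [_] => 1
  | z :: w :: t => (if sameDir z w then 0 else 1) + numBlocks (w :: t)

def startsX (r : List (RLetter A)) : Prop := ∃ a t, r = RLetter.X a :: t
def startsY (r : List (RLetter A)) : Prop := ∃ a t, r = RLetter.Y a :: t
def endsX (r : List (RLetter A)) : Prop := ∃ a, r.getLast? = some (RLetter.X a)
def endsY (r : List (RLetter A)) : Prop := ∃ a, r.getLast? = some (RLetter.Y a)

/-- `R^X_{m,n}`: rankers with exactly `m` blocks, depth `n`, starting with an `X`-block. -/
def RX (m n : ℕ) (r : List (RLetter A)) : Prop :=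
  numBlocks r = m ∧ r.length = n ∧ startsX r

/-- `R^Y_{m,n}`: rankers with exactly `m` blocks, depth `n`, starting with a `Y`-block. -/
def RY (m n : ℕ) (r : List (RLetter A)) : Prop :=
  numBlocks r = m ∧ r.length = n ∧ startsY r

/-- `uR^X_{m,n}`. -/
def uRX (m n : ℕ) (r : List (RLetter A)) : Prop :=
  (∃ m' n', m' ≤ m ∧ n' ≤ n ∧ RX m' n' r) ∨ (∃ m' n', m' < m ∧ n' < n ∧ RY m' n' r)

/-- `uR^Y_{m,n}`. -/
def uRY (m n : ℕ) (r : List (RLetter A)) : Prop :=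
  (∃ m' n', m' ≤ m ∧ n' ≤ n ∧ RY m' n' r) ∨ (∃ m' n', m' < m ∧ n' < n ∧ RX m' n' r)

/-- `uR_{m,n} = uR^X_{m,n} ∪ uR^Y_{m,n}`. -/
def uR (m n : ℕ) (r : List (RLetter A)) : Prop := uRX m n r ∨ uRY m n r

/-- `uR^X_m = ∪_{n ≥ m} uR^X_{m,n}`. -/
def uRXm (m : ℕ) (r : List (RLetter A)) : Prop := ∃ n, m ≤ n ∧ uRX m n r

/-- `uR^Y_m = ∪_{n ≥ m} uR^Y_{m,n}`. -/
def uRYm (m : ℕ) (r : List (RLetter A)) : Prop := ∃ n, m ≤ n ∧ uRY m n r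

/-- `r = Z₁ ⋯ Z_n` is condensed on `u`: it is defined on `u` and there is a chain of
open intervals `(0;|u|+1) = (i₀;j₀) ⊃ (i₁;j₁) ⊃ ⋯ ⊃ (i_{n-1};j_{n-1}) ∋ r(u)`
updated according to the pairs `Z_ℓ Z_{ℓ+1}`. -/
def Condensed (u : List A) (r : List (RLetter A)) : Prop :=
  ∃ (p : ℕ) (i j : ℕ → ℕ),
    evalR u r = some p ∧
    i 0 = 0 ∧ j 0 = u.length + 1 ∧
    (∀ ℓ a b, 1 ≤ ℓ → r[ℓ-1]? = some (RLetter.X a) → r[ℓ]? = some (RLetter.X b) →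
        nextOcc u a (i (ℓ-1)) = some (i ℓ) ∧ j ℓ = j (ℓ-1)) ∧
    (∀ ℓ a b, 1 ≤ ℓ → r[ℓ-1]? = some (RLetter.Y a) → r[ℓ]? = some (RLetter.Y b) →
        i ℓ = i (ℓ-1) ∧ prevOcc u a (j (ℓ-1)) = some (j ℓ)) ∧
    (∀ ℓ a b, 1 ≤ ℓ → r[ℓ-1]? = some (RLetter.X a) → r[ℓ]? = some (RLetter.Y b) →
        i ℓ = i (ℓ-1) ∧ nextOcc u a (i (ℓ-1)) = some (j ℓ)) ∧
    (∀ ℓ a b, 1 ≤ ℓ → r[ℓ-1]? = some (RLetter.Y a) → r[ℓ]? = some (RLetter.X b) →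
        prevOcc u a (j (ℓ-1)) = some (i ℓ) ∧ j ℓ = j (ℓ-1)) ∧
    (∀ ℓ, 1 ≤ ℓ → ℓ < r.length →
        i (ℓ-1) ≤ i ℓ ∧ j ℓ ≤ j (ℓ-1) ∧ (i (ℓ-1) < i ℓ ∨ j ℓ < j (ℓ-1))) ∧
    i (r.length - 1) < p ∧ p < j (r.length - 1)

/-- `u` and `v` agree on rankers from the set `R`. -/
def AgreeDef (R : List (RLetter A) → Prop) (u v : List A) : Prop :=
  ∀ r, R r → (Defined u r ↔ Defined v r)

/-- `u` and `v` agree on condensed rankers from the set `R`. -/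
def AgreeCond (R : List (RLetter A) → Prop) (u v : List A) : Prop :=
  ∀ r, R r → (Condensed u r ↔ Condensed v r)

/-- `u ⊳_{m,n} v`. -/
def trir (m n : ℕ) (u v : List A) : Prop := AgreeCond (uRX m n) u v

/-- `u ⊲_{m,n} v`. -/
def tril (m n : ℕ) (u v : List A) : Prop := AgreeCond (uRY m n) u v

/-- The alphabet (set of letters) of a word. -/
def alph (u : List A) : Finset A := u.toFinset

/-- Condition (WI 1). -/
def WI1 (m n : ℕ) (u v : List A) : Prop := AgreeDef (uR m n) u v

/-- Condition (WI 2). -/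
def WI2 (m n : ℕ) (u v : List A) : Prop :=
  ∀ r r', uR m n r → uR (m-1) (n-1) r' →
    Defined u r → Defined v r → Defined u r' → Defined v r' →
    compare (pos u r) (pos u r') = compare (pos v r) (pos v r')

/-- Condition (WI 3). -/
def WI3 (m n : ℕ) (u v : List A) : Prop :=
  ∀ r r', uR m n r → uR m (n-1) r' →
    ((endsX r ∧ endsY r') ∨ (endsY r ∧ endsX r')) →
    Defined u r → Defined v r → Defined u r' → Defined v r' →
    compare (pos u r) (pos u r') = compare (pos v r) (pos v r')

/-- Condition (WI 1c). -/
def WI1c (m n : ℕ) (u v : List A) : Prop := AgreeCond (uR m n) u v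

/-- Condition (WI 2c). -/
def WI2c (m n : ℕ) (u v : List A) : Prop :=
  ∀ r r', uR m n r → uR (m-1) (n-1) r' →
    Condensed u r → Condensed v r → Condensed u r' → Condensed v r' →
    compare (pos u r) (pos u r') = compare (pos v r) (pos v r')

/-- Condition (WI 3c). -/
def WI3c (m n : ℕ) (u v : List A) : Prop :=
  ∀ r r', uR m n r → uR m (n-1) r' →
    ((endsX r ∧ endsY r') ∨ (endsY r ∧ endsX r')) →
    Condensed u r → Condensed v r → Condensed u r' → Condensed v r' →
    compare (pos u r) (pos u r') = compare (pos v r) (pos v r')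


/-- The three-letter alphabet `{a, b, c}`. -/
inductive ABC : Type where
  | a | b | c
  deriving DecidableEq

instance : Fintype ABC where
  elems := {ABC.a, ABC.b, ABC.c}
  complete := fun x => by cases x <;> simp

/-- `w^k`. -/
def wpow (w : List ABC) (k : ℕ) : List ABC := (List.replicate k w).flatten

/-- `u_n = (bc)^n (a (bc)^n)^n`. -/
def un (k : ℕ) : List ABC :=
  wpow [ABC.b, ABC.c] k ++ wpow (ABC.a :: wpow [ABC.b, ABC.c] k) k

/-- `v_n = (bc)^n b (a (bc)^n)^n`. -/
def vn (k : ℕ) : List ABC :=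
  wpow [ABC.b, ABC.c] k ++ ABC.b :: wpow (ABC.a :: wpow [ABC.b, ABC.c] k) k

theorem nextOcc_some_iff (u : List A) (a : A) (q p : ℕ) :
    nextOcc u a q = some p ↔
      q < p ∧ u[p-1]? = some a ∧ ∀ i, q < i → i < p → u[i-1]? ≠ some a := by
  unfold nextOcc
  rw [List.head?_filter, List.find?_range_eq_some]
  simp only [decide_eq_true_eq, List.mem_range, Bool.not_eq_true', decide_eq_false_iff_not]
  constructor
  · rintro ⟨⟨h1, h2⟩, h3, h4⟩
    exact ⟨h1, h2, fun i hi hip he => h4 i hip ⟨hi, he⟩⟩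
  · rintro ⟨h1, h2, h3⟩
    refine ⟨⟨h1, h2⟩, ?_, fun i hi he => h3 i he.1 hi he.2⟩
    obtain ⟨h, _⟩ := List.getElem?_eq_some_iff.1 h2
    omega

theorem nextOcc_none_iff (u : List A) (a : A) (q : ℕ) :
    nextOcc u a q = none ↔ ∀ i, q < i → u[i-1]? ≠ some a := by
  unfold nextOcc
  rw [List.head?_filter, List.find?_eq_none]
  simp only [decide_eq_true_eq, List.mem_range]
  constructor
  · intro h i hi he
    obtain ⟨h', _⟩ := List.getElem?_eq_some_iff.1 he
    exact h i (by omega) ⟨hi, he⟩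
  · rintro h i _ ⟨h1, h2⟩
    exact h i h1 h2

theorem prevOcc_none_iff (u : List A) (a : A) (q : ℕ) :
    prevOcc u a q = none ↔ ∀ i, 1 ≤ i → i < q → u[i-1]? ≠ some a := by
  unfold prevOcc
  rw [List.getLast?_eq_none_iff, List.filter_eq_nil_iff]
  simp only [decide_eq_true_eq, List.mem_range]
  constructor
  · intro h i hi hq he
    obtain ⟨h', _⟩ := List.getElem?_eq_some_iff.1 he
    exact h i (by omega) ⟨hi, hq, he⟩
  · rintro h i _ ⟨h1, h2, h3⟩
    exact h i h1 h2 h3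

theorem prevOcc_of_some (u : List A) (a : A) (q p : ℕ) (h : prevOcc u a q = some p) :
      1 ≤ p ∧ p < q ∧ u[p-1]? = some a ∧ ∀ i, p < i → i < q → u[i-1]? ≠ some a := by
  unfold prevOcc at h
  have hm := List.mem_of_getLast? h
  have hs : List.Pairwise (· < ·) ((List.range (u.length + 2)).filter
    (fun i => decide (1 ≤ i ∧ i < q ∧ u[i-1]? = some a))) :=
      List.Pairwise.filter _ List.pairwise_lt_range
  obtain ⟨l, hl⟩ := List.getLast?_eq_some_iff.1 h
  have hm' := hm
  simp only [List.mem_filter, decide_eq_true_eq, List.mem_range] at hm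
  refine ⟨hm.2.1, hm.2.2.1, hm.2.2.2, fun i hi hq he => ?_⟩
  obtain ⟨h', _⟩ := List.getElem?_eq_some_iff.1 he
  have : i ∈ ((List.range (u.length + 2)).filter
    (fun i => decide (1 ≤ i ∧ i < q ∧ u[i-1]? = some a))) := by
    simp only [List.mem_filter, decide_eq_true_eq, List.mem_range]
    exact ⟨by omega, by omega, hq, he⟩
  rw [hl] at this hs
  rw [List.pairwise_append] at hs
  rw [List.mem_append, List.mem_singleton] at this
  rcases this with h1 | h1
  · have := hs.2.2 i h1 p (by simp)
    omega
  · omega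

theorem prevOcc_some_iff (u : List A) (a : A) (q p : ℕ) :
    prevOcc u a q = some p ↔
      1 ≤ p ∧ p < q ∧ u[p-1]? = some a ∧ ∀ i, p < i → i < q → u[i-1]? ≠ some a := by
  refine ⟨prevOcc_of_some u a q p, ?_⟩
  rintro ⟨h1, h2, h3, h4⟩
  cases h : prevOcc u a q with
  | none => exact absurd h3 ((prevOcc_none_iff u a q).1 h p h1 h2)
  | some p' =>
    obtain ⟨g1, g2, g3, g4⟩ := prevOcc_of_some u a q p' h
    rcases lt_trichotomy p p' with hl | hl | hl
    · exact absurd g3 (h4 p' hl g2)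
    · rw [hl]
    · exact absurd h3 (g4 p hl h2)

theorem evalFrom_append (u : List A) (r s : List (RLetter A)) (q : ℕ) :
    evalFrom u (r ++ s) q = (evalFrom u r q).bind (evalFrom u s) := by
  induction r generalizing q with
  | nil => rfl
  | cons z r ih =>
    simp only [List.cons_append, evalFrom]
    cases stepR u z q with
    | none => rfl
    | some p => simpa using ih p

/-- rankers with only X-letters / only Y-letters -/
def xw (l : List A) : List (RLetter A) := l.map RLetter.X
def yw (l : List A) : List (RLetter A) := l.map RLetter.Y

theorem decomp1 (r : List (RLetter A)) :
    (startsX r → numBlocks r ≤ 1 → ∃ x, r = xw x) ∧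
    (startsY r → numBlocks r ≤ 1 → ∃ x, r = yw x) ∧
    (startsY r → numBlocks r ≤ 2 → ∃ y x, r = yw y ++ xw x) ∧
    (startsX r → numBlocks r ≤ 3 → ∃ x y z, r = xw x ++ (yw y ++ xw z)) := by
  induction r with
  | nil => simp [startsX, startsY]
  | cons z t ih =>
    cases t with
    | nil =>
      cases z with
      | X a =>
        refine ⟨fun _ _ => ⟨[a], rfl⟩, ?_, ?_, fun _ _ => ⟨[a], [], [], rfl⟩⟩ <;> simp [startsY]
      | Y a =>
        refine ⟨?_, fun _ _ => ⟨[a], rfl⟩, fun _ _ => ⟨[a], [], rfl⟩, ?_⟩ <;> simp [startsX]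
    | cons w t =>
      obtain ⟨i1, i2, i3, i4⟩ := ih
      have hp : 1 ≤ numBlocks (w :: t) := by
        clear i1 i2 i3 i4
        induction t generalizing w with
        | nil => simp [numBlocks]
        | cons x t ih => have := ih x; simp only [numBlocks] at this ⊢; omega
      cases z with
      | X a =>
        refine ⟨fun _ h => ?_, by simp [startsY], by simp [startsY], fun _ h => ?_⟩
        · cases w with
          | X b =>
            obtain ⟨x, hx⟩ := i1 ⟨_, _, rfl⟩ (by simpa [numBlocks, sameDir] using h)
            exact ⟨a :: x, by rw [hx]; rfl⟩
          | Y b => simp [numBlocks, sameDir] at h hp; omega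
        · cases w with
          | X b =>
            obtain ⟨x, y, z, hx⟩ := i4 ⟨_, _, rfl⟩ (by simpa [numBlocks, sameDir] using h)
            exact ⟨a :: x, y, z, by rw [hx]; rfl⟩
          | Y b =>
            obtain ⟨y, z, hx⟩ := i3 ⟨_, _, rfl⟩ (by simp [numBlocks, sameDir] at h; omega)
            exact ⟨[a], y, z, by rw [hx]; rfl⟩
      | Y a =>
        refine ⟨by simp [startsX], fun _ h => ?_, fun _ h => ?_, by simp [startsX]⟩
        · cases w with
          | Y b =>
            obtain ⟨x, hx⟩ := i2 ⟨_, _, rfl⟩ (by simpa [numBlocks, sameDir] using h)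
            exact ⟨a :: x, by rw [hx]; rfl⟩
          | X b => simp [numBlocks, sameDir] at h hp; omega
        · cases w with
          | Y b =>
            obtain ⟨x, y, hx⟩ := i3 ⟨_, _, rfl⟩ (by simpa [numBlocks, sameDir] using h)
            exact ⟨a :: x, y, by rw [hx]; rfl⟩
          | X b =>
            obtain ⟨y, hx⟩ := i1 ⟨_, _, rfl⟩ (by simp [numBlocks, sameDir] at h; omega)
            exact ⟨[a], y, by rw [hx]; rfl⟩

theorem wpow_succ (w : List ABC) (k : ℕ) : wpow w (k+1) = w ++ wpow w k := by
  simp [wpow, List.replicate_succ]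

theorem bc_length (k : ℕ) : (wpow [ABC.b, ABC.c] k).length = 2 * k := by
  simp [wpow]; ring

theorem bc_get (k i : ℕ) (h : i < 2 * k) :
    (wpow [ABC.b, ABC.c] k)[i]? = some (if i % 2 = 0 then ABC.b else ABC.c) := by
  induction k generalizing i with
  | zero => omega
  | succ k ih =>
    rw [wpow_succ]
    match i with
    | 0 => simp
    | 1 => simp
    | i + 2 => simpa using ih i (by omega)

/-- X-letters can always be read as long as enough full blocks remain -/
theorem xdef (w : List ABC) (hw : ∀ x, x ∈ w) (x : List ABC) (k : ℕ) (hx : x.length ≤ k)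
    (s : List ABC) (q : ℕ) (hq : q ≤ s.length) :
    (evalFrom (s ++ wpow w k) (xw x) q).isSome := by
  induction x generalizing k s q with
  | nil => rfl
  | cons a x ih =>
    cases k with
    | zero => simp at hx
    | succ k =>
      obtain ⟨m, hm, hma⟩ := List.getElem_of_mem (hw a)
      have hat : (s ++ wpow w (k+1))[s.length + m]? = some a := by
        rw [wpow_succ, List.getElem?_append_right (by omega), List.getElem?_append_left (by omega)]
        simp [hm, hma]
      simp only [xw, List.map_cons, evalFrom, stepR]
      cases h : nextOcc (s ++ wpow w (k+1)) a q with
      | none =>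
        exact absurd hat (by
          have := (nextOcc_none_iff _ _ _).1 h (s.length + m + 1) (by omega)
          simpa using this)
      | some p =>
        obtain ⟨h1, h2, h3⟩ := (nextOcc_some_iff _ _ _ _).1 h
        have hp : p ≤ s.length + m + 1 := by
          by_contra hc
          have := h3 (s.length + m + 1) (by omega) (by omega)
          exact absurd hat (by simpa using this)
        have := ih k (by simpa using hx) (s ++ w) p (by simp; omega)
        rw [wpow_succ, ← List.append_assoc]
        exact this

/-- The relevant properties of the pair `un n`, `vn n`. -/
structure Pair (n : ℕ) (u v : List ABC) : Prop where
  hn : 1 ≤ n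
  ul : ∀ p, 1 ≤ p → p ≤ 2 * n → u[p-1]? = some (if p % 2 = 1 then ABC.b else ABC.c)
  vl : ∀ p, 1 ≤ p → p ≤ 2 * n + 1 → v[p-1]? = some (if p % 2 = 1 then ABC.b else ABC.c)
  ua : ∀ p, p = 2 * n + 1 → u[p-1]? = some ABC.a
  sh : ∀ p, 2 * n < p → v[p + 1 - 1]? = u[p-1]?
  len : v.length = u.length + 1
  big : 2 * n ≤ u.length
  ux : ∀ x : List ABC, x.length ≤ n → ∀ q, q ≤ 2 * n → (evalFrom u (xw x) q).isSome
  vx : ∀ x : List ABC, x.length ≤ n → ∀ q, q ≤ 2 * n + 1 → (evalFrom v (xw x) q).isSome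

theorem pair_unvn (n : ℕ) (hn : 1 ≤ n) : Pair n (un n) (vn n) := by
  have hw : ∀ x, x ∈ (ABC.a :: wpow [ABC.b, ABC.c] n) := by
    obtain ⟨m, rfl⟩ : ∃ m, n = m + 1 := ⟨n - 1, by omega⟩
    intro x
    rw [wpow_succ]
    cases x <;> simp
  have hl := bc_length n
  have hu : ∀ p, 1 ≤ p → p ≤ 2 * n →
      (wpow [ABC.b, ABC.c] n)[p-1]? = some (if p % 2 = 1 then ABC.b else ABC.c) := by
    intro p h1 h2
    rw [bc_get n (p-1) (by omega)]
    have : ((p - 1) % 2 = 0) ↔ (p % 2 = 1) := by omega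
    simp [this]
  have hv : vn n = (wpow [ABC.b, ABC.c] n ++ [ABC.b]) ++
      wpow (ABC.a :: wpow [ABC.b, ABC.c] n) n := by simp [vn]
  constructor
  · exact hn
  · intro p h1 h2
    rw [un, List.getElem?_append_left (by omega)]
    exact hu p h1 h2
  · intro p h1 h2
    by_cases h : p ≤ 2 * n
    · rw [vn, List.getElem?_append_left (by omega)]
      exact hu p h1 h
    · obtain rfl : p = 2 * n + 1 := by omega
      rw [vn, List.getElem?_append_right (by omega), hl]
      have : (2 * n + 1) % 2 = 1 := by omega
      simp
  · rintro p rfl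
    rw [un, List.getElem?_append_right (by omega), hl]
    obtain ⟨m, hm⟩ : ∃ m, n = m + 1 := ⟨n - 1, by omega⟩
    have : ∀ w, wpow w n = w ++ wpow w m := by intro w; rw [hm, wpow_succ]
    rw [this (ABC.a :: _)]
    simp
  · intro p hp
    rw [un, vn, List.getElem?_append_right (by omega), List.getElem?_append_right (by omega), hl]
    have : p + 1 - 1 - 2 * n = (p - 1 - 2 * n) + 1 := by omega
    rw [this, List.getElem?_cons_succ]
  · simp [un, vn]; omega
  · simp [un, hl]
  · intro x hx q hq
    exact xdef _ hw x n hx _ q (by omega)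
  · intro x hx q hq
    rw [hv]
    exact xdef _ hw x n hx _ q (by simp; omega)

/-- corresponding positions -/
def Phi (n p p' : ℕ) : Prop := (p ≤ 2 * n ∧ p' = p) ∨ (2 * n < p ∧ p' = p + 1)

/-- lift a relation to options -/
def ORel (R : ℕ → ℕ → Prop) (o o' : Option ℕ) : Prop :=
  (o = none ∧ o' = none) ∨ ∃ p p', o = some p ∧ o' = some p' ∧ R p p'

section
variable {n : ℕ} {u v : List ABC}

theorem next_right (H : Pair n u v) (a : ABC) (p : ℕ) (hp : 2 * n < p) :
    ORel (fun q q' => 2 * n < q ∧ q' = q + 1) (nextOcc u a p) (nextOcc v a (p+1)) := by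
  cases h : nextOcc u a p with
  | none =>
    left
    refine ⟨rfl, ?_⟩
    rw [nextOcc_none_iff] at h ⊢
    intro i hi
    obtain ⟨j, rfl⟩ : ∃ j, i = j + 1 := ⟨i - 1, by omega⟩
    rw [H.sh j (by omega)]
    exact h j (by omega)
  | some q =>
    right
    rw [nextOcc_some_iff] at h
    obtain ⟨h1, h2, h3⟩ := h
    refine ⟨q, q + 1, rfl, ?_, by omega, rfl⟩
    rw [nextOcc_some_iff]
    refine ⟨by omega, by rw [H.sh q (by omega)]; exact h2, fun i hi hi' => ?_⟩
    obtain ⟨j, rfl⟩ : ∃ j, i = j + 1 := ⟨i - 1, by omega⟩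
    rw [H.sh j (by omega)]
    exact h3 j (by omega) (by omega)

theorem xblock_right (H : Pair n u v) (x : List ABC) (p : ℕ) (hp : 2 * n < p) :
    ORel (fun q q' => 2 * n < q ∧ q' = q + 1) (evalFrom u (xw x) p)
      (evalFrom v (xw x) (p+1)) := by
  induction x generalizing p with
  | nil => exact Or.inr ⟨p, p + 1, rfl, rfl, hp, rfl⟩
  | cons a x ih =>
    simp only [xw, List.map_cons, evalFrom, stepR]
    rcases next_right H a p hp with ⟨h1, h2⟩ | ⟨q, q', h1, h2, h3, rfl⟩
    · left; simp [h1, h2]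
    · rw [h1, h2]
      exact ih q h3

theorem next_a (H : Pair n u v) (p : ℕ) (hp : p ≤ 2 * n) :
    nextOcc u ABC.a p = some (2 * n + 1) ∧ nextOcc v ABC.a p = some (2 * n + 2) := by
  rw [nextOcc_some_iff, nextOcc_some_iff]
  refine ⟨⟨by omega, H.ua _ rfl, fun i h1 h2 => ?_⟩, ⟨by omega, ?_, fun i h1 h2 => ?_⟩⟩
  · rw [H.ul i (by omega) (by omega)]; split <;> simp
  · rw [H.sh (2 * n + 1) (by omega)]; exact H.ua _ rfl
  · rw [H.vl i (by omega) (by omega)]; split <;> simp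

theorem next_bc (H : Pair n u v) (a : ABC) (ha : a ≠ ABC.a) (p : ℕ) (hp : p + 2 ≤ 2 * n) :
    ∃ q, q ≤ p + 2 ∧ nextOcc u a p = some q ∧ nextOcc v a p = some q := by
  by_cases h : (if (p+1) % 2 = 1 then ABC.b else ABC.c) = a
  · refine ⟨p + 1, by omega, ?_, ?_⟩
    · rw [nextOcc_some_iff, H.ul (p+1) (by omega) (by omega), h]
      exact ⟨by omega, rfl, fun i h1 h2 => by omega⟩
    · rw [nextOcc_some_iff, H.vl (p+1) (by omega) (by omega), h]
      exact ⟨by omega, rfl, fun i h1 h2 => by omega⟩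
  · have h' : (if (p+2) % 2 = 1 then ABC.b else ABC.c) = a := by
      cases a
      · exact absurd rfl ha
      · split at h
        · exact absurd rfl h
        · rw [if_pos (by omega)]
      · split at h
        · rw [if_neg (by omega)]
        · exact absurd rfl h
    refine ⟨p + 2, by omega, ?_, ?_⟩
    · rw [nextOcc_some_iff, H.ul (p+2) (by omega) (by omega), h']
      refine ⟨by omega, rfl, fun i h1 h2 => ?_⟩
      obtain rfl : i = p + 1 := by omega
      rw [H.ul (p+1) (by omega) (by omega)]
      simpa using h
    · rw [nextOcc_some_iff, H.vl (p+2) (by omega) (by omega), h']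
      refine ⟨by omega, rfl, fun i h1 h2 => ?_⟩
      obtain rfl : i = p + 1 := by omega
      rw [H.vl (p+1) (by omega) (by omega)]
      simpa using h

theorem xblock_first (H : Pair n u v) (x : List ABC) (p : ℕ) (hp : p + 2 * x.length ≤ 2 * n) :
    ORel (Phi n) (evalFrom u (xw x) p) (evalFrom v (xw x) p) := by
  induction x generalizing p with
  | nil => exact Or.inr ⟨p, p, rfl, rfl, Or.inl ⟨by simpa using hp, rfl⟩⟩
  | cons a x ih =>
    simp only [xw, List.map_cons, evalFrom, stepR]
    simp only [List.length_cons] at hp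
    by_cases ha : a = ABC.a
    · subst ha
      obtain ⟨h1, h2⟩ := next_a H p (by omega)
      rw [h1, h2]
      rcases xblock_right H x (2 * n + 1) (by omega) with h | ⟨q, q', h3, h4, h5⟩
      · exact Or.inl h
      · exact Or.inr ⟨q, q', h3, h4, Or.inr h5⟩
    · obtain ⟨q, hq, h1, h2⟩ := next_bc H a ha p (by omega)
      rw [h1, h2]
      exact ih q (by omega)

/-- invariant for Y-blocks -/
def Inv (n j p p' : ℕ) : Prop :=
  Phi n p p' ∨ (2 * j + 1 ≤ p ∧ p ≤ 2 * n ∧ 2 * j + 1 ≤ p' ∧ p' ≤ 2 * n + 1)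

/-- `prevOcc` in an alternating prefix -/
theorem prev_alt (w : List ABC) (m : ℕ)
    (hw : ∀ p, 1 ≤ p → p ≤ m → w[p-1]? = some (if p % 2 = 1 then ABC.b else ABC.c))
    (p : ℕ) (hp : p ≤ m + 1) :
    prevOcc w ABC.a p = none ∧ ∀ a, a ≠ ABC.a → 3 ≤ p →
      ∃ q, p ≤ q + 2 ∧ q < p ∧ prevOcc w a p = some q := by
  constructor
  · rw [prevOcc_none_iff]
    intro i h1 h2
    rw [hw i h1 (by omega)]; split <;> simp
  · intro a ha h3
    by_cases h : (if (p-1) % 2 = 1 then ABC.b else ABC.c) = a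
    · refine ⟨p - 1, by omega, by omega, ?_⟩
      rw [prevOcc_some_iff, hw (p-1) (by omega) (by omega), h]
      exact ⟨by omega, by omega, rfl, fun i h1 h2 => by omega⟩
    · have h' : (if (p-2) % 2 = 1 then ABC.b else ABC.c) = a := by
        cases a
        · exact absurd rfl ha
        · split at h
          · exact absurd rfl h
          · rw [if_pos (by omega)]
        · split at h
          · rw [if_neg (by omega)]
          · exact absurd rfl h
      refine ⟨p - 2, by omega, by omega, ?_⟩
      rw [prevOcc_some_iff, hw (p-2) (by omega) (by omega), h']
      refine ⟨by omega, by omega, rfl, fun i h1 h2 => ?_⟩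
      obtain rfl : i = p - 1 := by omega
      rw [hw (p-1) (by omega) (by omega)]
      simpa using h

/-- skipping positions without the letter -/
theorem prev_skip (w : List ABC) (a : ABC) (m p : ℕ) (hm : m ≤ p)
    (h : ∀ i, m ≤ i → i < p → w[i-1]? ≠ some a) : prevOcc w a p = prevOcc w a m := by
  cases h' : prevOcc w a m with
  | none =>
    rw [prevOcc_none_iff] at h' ⊢
    intro i h1 h2
    by_cases hi : i < m
    · exact h' i h1 hi
    · exact h i (by omega) h2
  | some q =>
    rw [prevOcc_some_iff] at h' ⊢
    obtain ⟨h1, h2, h3, h4⟩ := h'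
    refine ⟨h1, by omega, h3, fun i g1 g2 => ?_⟩
    by_cases hi : i < m
    · exact h4 i g1 hi
    · exact h i (by omega) g2

theorem prev_low (H : Pair n u v) (a : ABC) (p : ℕ) (hp : p ≤ 2 * n + 1) :
    prevOcc u a p = prevOcc v a p := by
  cases h' : prevOcc v a p with
  | none =>
    rw [prevOcc_none_iff] at h' ⊢
    intro i h1 h2
    rw [H.ul i h1 (by omega), ← H.vl i h1 (by omega)]
    exact h' i h1 h2
  | some q =>
    rw [prevOcc_some_iff] at h' ⊢
    obtain ⟨h1, h2, h3, h4⟩ := h'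
    refine ⟨h1, h2, ?_, fun i g1 g2 => ?_⟩
    · rw [H.ul q h1 (by omega), ← H.vl q h1 (by omega)]
      exact h3
    · rw [H.ul i (by omega) (by omega), ← H.vl i (by omega) (by omega)]
      exact h4 i g1 g2

theorem ystep (H : Pair n u v) (a : ABC) (j p p' : ℕ) (hj : j + 1 ≤ n)
    (h : Inv n (j+1) p p') : ORel (Inv n j) (prevOcc u a p) (prevOcc v a p') := by
  have both : ∀ p p', 2 * (j + 1) + 1 ≤ p → p ≤ 2 * n + 1 → 2 * (j + 1) + 1 ≤ p' →
      p' ≤ 2 * n + 2 → ORel (Inv n j) (prevOcc u a p) (prevOcc v a p') := by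
    intro p p' h1 h2 h3 h4
    obtain ⟨e1, e2⟩ := prev_alt u (2 * n) H.ul p (by omega)
    obtain ⟨e3, e4⟩ := prev_alt v (2 * n + 1) H.vl p' (by omega)
    by_cases ha : a = ABC.a
    · subst ha; exact Or.inl ⟨e1, e3⟩
    · obtain ⟨q, q1, q2, q3⟩ := e2 a ha (by omega)
      obtain ⟨q', q1', q2', q3'⟩ := e4 a ha (by omega)
      exact Or.inr ⟨q, q', q3, q3', Or.inr (by omega)⟩
  rcases h with (⟨h1, rfl⟩ | ⟨h1, rfl⟩) | ⟨h1, h2, h3, h4⟩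
  · rw [prev_low H a p' (by omega)]
    cases h : prevOcc v a p' with
    | none => exact Or.inl ⟨rfl, rfl⟩
    | some q =>
      have := prevOcc_of_some _ _ _ _ h
      exact Or.inr ⟨q, q, rfl, rfl, Or.inl (Or.inl ⟨by omega, rfl⟩)⟩
  · by_cases hex : ∀ i, 2 * n + 1 ≤ i → i < p → u[i-1]? ≠ some a
    · rw [prev_skip u a (2 * n + 1) p (by omega) hex,
        prev_skip v a (2 * n + 2) (p + 1) (by omega)]
      · exact both _ _ (by omega) (by omega) (by omega) (by omega)
      · intro i g1 g2
        obtain ⟨i, rfl⟩ : ∃ m, i = m + 1 := ⟨i - 1, by omega⟩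
        rw [H.sh i (by omega)]
        exact hex i (by omega) (by omega)
    · push Not at hex
      obtain ⟨i, i1, i2, i3⟩ := hex
      cases h : prevOcc u a p with
      | none => exact absurd i3 ((prevOcc_none_iff _ _ _).1 h i (by omega) i2)
      | some q =>
        obtain ⟨g1, g2, g3, g4⟩ := prevOcc_of_some _ _ _ _ h
        have hq : i ≤ q := by
          by_contra hc
          exact g4 i (by omega) i2 i3
        refine Or.inr ⟨q, q + 1, rfl, ?_, Or.inl (Or.inr ⟨by omega, rfl⟩)⟩
        rw [prevOcc_some_iff]
        refine ⟨by omega, by omega, by rw [H.sh q (by omega)]; exact g3, fun m m1 m2 => ?_⟩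
        obtain ⟨m, rfl⟩ : ∃ t, m = t + 1 := ⟨m - 1, by omega⟩
        rw [H.sh m (by omega)]
        exact g4 m (by omega) (by omega)
  · exact both p p' h1 (by omega) h3 (by omega)

theorem yblock (H : Pair n u v) (y : List ABC) (hy : y.length ≤ n) (p p' : ℕ)
    (h : Inv n y.length p p') :
    ORel (Inv n 0) (evalFrom u (yw y) p) (evalFrom v (yw y) p') := by
  induction y generalizing p p' with
  | nil => exact Or.inr ⟨p, p', rfl, rfl, h⟩
  | cons a y ih =>
    simp only [yw, List.map_cons, evalFrom, stepR]
    simp only [List.length_cons] at hy h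
    rcases ystep H a y.length p p' hy h with ⟨h1, h2⟩ | ⟨q, q', h1, h2, h3⟩
    · left; simp [h1, h2]
    · rw [h1, h2]
      exact ih (by omega) q q' h3

theorem xblock_last (H : Pair n u v) (x : List ABC) (hx : x.length ≤ n) (p p' : ℕ)
    (h : Inv n 0 p p') :
    (evalFrom u (xw x) p).isSome ↔ (evalFrom v (xw x) p').isSome := by
  by_cases hp : p ≤ 2 * n
  · have hp' : p' ≤ 2 * n + 1 := by unfold Inv Phi at h; omega
    exact iff_of_true (H.ux x hx p hp) (H.vx x hx p' hp')
  · obtain rfl : p' = p + 1 := by unfold Inv Phi at h; omega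
    rcases xblock_right H x p (by omega) with ⟨h1, h2⟩ | ⟨q, q', h1, h2, _⟩ <;> simp [h1, h2]

theorem yxblock (H : Pair n u v) (y x : List ABC) (hy : y.length ≤ n) (hx : x.length ≤ n)
    (p p' : ℕ) (h : Phi n p p') :
    (evalFrom u (yw y ++ xw x) p).isSome ↔ (evalFrom v (yw y ++ xw x) p').isSome := by
  rw [evalFrom_append, evalFrom_append]
  rcases yblock H y hy p p' (Or.inl h) with ⟨h1, h2⟩ | ⟨q, q', h1, h2, h3⟩
  · simp [h1, h2]
  · rw [h1, h2]
    exact xblock_last H x hx q q' h3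

theorem agree (H : Pair n u v) (r : List (RLetter ABC)) (hr : uRX 3 n r) :
    Defined u r ↔ Defined v r := by
  rcases hr with ⟨m, l, hm, hl, rfl, rfl, hs⟩ | ⟨m, l, hm, hl, rfl, rfl, hs⟩
  · obtain ⟨x, y, z, e⟩ := (decomp1 r).2.2.2 hs hm
    obtain ⟨a, t, rfl⟩ := hs
    change (evalFrom u _ 0).isSome ↔ (evalFrom v _ 0).isSome
    rw [e] at hl ⊢
    simp only [xw, yw, List.length_append, List.length_map] at hl
    rw [evalFrom_append, evalFrom_append]
    rcases xblock_first H x 0 (by omega) with ⟨h1, h2⟩ | ⟨q, q', h1, h2, h3⟩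
    · simp [h1, h2]
    · rw [h1, h2]
      exact yxblock H y z (by omega) (by omega) q q' h3
  · obtain ⟨y, z, e⟩ := (decomp1 r).2.2.1 hs (by omega)
    obtain ⟨a, t, rfl⟩ := hs
    change (evalFrom u _ (u.length + 1)).isSome ↔ (evalFrom v _ (v.length + 1)).isSome
    rw [e] at hl ⊢
    simp only [xw, yw, List.length_append, List.length_map] at hl
    have := H.big
    exact yxblock H y z (by omega) (by omega) _ _ (Or.inr ⟨by omega, by rw [H.len]⟩)

theorem part1u (H : Pair n u v) :
    Condensed u [RLetter.X ABC.a, RLetter.Y ABC.b, RLetter.X ABC.c] := by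
  have hn := H.hn
  have h1 := (next_a H 0 (by omega)).1
  have h2 : prevOcc u ABC.b (2 * n + 1) = some (2 * n - 1) := by
    rw [prevOcc_some_iff]
    refine ⟨by omega, by omega, ?_, fun i g1 g2 => ?_⟩
    · rw [H.ul _ (by omega) (by omega), if_pos (by omega)]
    · rw [H.ul _ (by omega) (by omega), if_neg (by omega)]; simp
  have h3 : nextOcc u ABC.c (2 * n - 1) = some (2 * n) := by
    rw [nextOcc_some_iff]
    refine ⟨by omega, ?_, fun i g1 g2 => by omega⟩
    rw [H.ul _ (by omega) (by omega), if_neg (by omega)]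
  have hb : 2 * n + 1 ≤ u.length := by
    obtain ⟨h, _⟩ := List.getElem?_eq_some_iff.1 (H.ua _ rfl)
    omega
  refine ⟨2 * n, fun l => if l = 2 then 2 * n - 1 else 0,
    fun l => if l = 0 then u.length + 1 else 2 * n + 1, ?_, rfl, rfl, ?_, ?_, ?_, ?_, ?_, ?_, ?_⟩
  · simp [evalR, evalFrom, stepR, startPos, h1, h2, h3]
  · rintro (_ | _ | _ | l) a b h <;> simp at h ⊢
  · rintro (_ | _ | _ | l) a b h <;> simp at h ⊢
  · rintro (_ | _ | _ | l) a b h <;> simp at h ⊢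
    rintro rfl; simp [h1]
  · rintro (_ | _ | _ | l) a b h <;> simp at h ⊢
    rintro rfl; simp [h2]
  · rintro (_ | _ | _ | l) h h' <;> simp at h h' ⊢ <;> omega
  · simp; omega
  · simp

theorem v_steps (H : Pair n u v) : nextOcc v ABC.a 0 = some (2 * n + 2) ∧
    prevOcc v ABC.b (2 * n + 2) = some (2 * n + 1) := by
  have hn := H.hn
  refine ⟨(next_a H 0 (by omega)).2, ?_⟩
  rw [prevOcc_some_iff]
  refine ⟨by omega, by omega, ?_, fun i g1 g2 => by omega⟩
  rw [H.vl _ (by omega) (by omega), if_pos (by omega)]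

theorem part1v (H : Pair n u v) :
    Defined v [RLetter.X ABC.a, RLetter.Y ABC.b, RLetter.X ABC.c] ∧
    ¬ Condensed v [RLetter.X ABC.a, RLetter.Y ABC.b, RLetter.X ABC.c] := by
  have hn := H.hn
  obtain ⟨h1, h2⟩ := v_steps H
  constructor
  · have := H.vx [ABC.c] (by simpa using hn) (2 * n + 1) le_rfl
    simpa [Defined, evalR, evalFrom, stepR, startPos, h1, h2, xw] using this
  · rintro ⟨p, i, j, _, hi0, _, _, _, c1, c2, _, c3, c4⟩
    have e1 := (c1 1 ABC.a ABC.b le_rfl rfl rfl).2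
    have e2 := c2 2 ABC.b ABC.c (by omega) rfl rfl
    simp only [Nat.sub_self, hi0, h1, Option.some.injEq] at e1
    simp only [show 2 - 1 = 1 from rfl, ← e1, h2, Option.some.injEq] at e2
    simp at c3 c4
    omega

theorem part3 (H : Pair n u v) :
    Defined u [RLetter.X ABC.a, RLetter.Y ABC.c, RLetter.X ABC.b, RLetter.Y ABC.a] ∧
    ¬ Defined v [RLetter.X ABC.a, RLetter.Y ABC.c, RLetter.X ABC.b, RLetter.Y ABC.a] := by
  have hn := H.hn
  obtain ⟨h1, h2⟩ := next_a H 0 (by omega)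
  have h3 : prevOcc u ABC.c (2 * n + 1) = some (2 * n) := by
    rw [prevOcc_some_iff]
    refine ⟨by omega, by omega, ?_, fun i g1 g2 => by omega⟩
    rw [H.ul _ (by omega) (by omega), if_neg (by omega)]
  have h4 : prevOcc v ABC.c (2 * n + 2) = some (2 * n) := by
    rw [prevOcc_some_iff]
    refine ⟨by omega, by omega, ?_, fun i g1 g2 => ?_⟩
    · rw [H.vl _ (by omega) (by omega), if_neg (by omega)]
    · rw [H.vl _ (by omega) (by omega), if_pos (by omega)]; simp
  constructor
  · have := H.ux [ABC.b] (by simpa using hn) (2 * n) le_rfl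
    simp only [xw, List.map_cons, List.map_nil, evalFrom, stepR] at this
    cases h5 : nextOcc u ABC.b (2 * n) with
    | none => simp [h5] at this
    | some p =>
      obtain ⟨g1, g2, _⟩ := (nextOcc_some_iff _ _ _ _).1 h5
      have hp : 2 * n + 1 < p := by
        by_contra hc
        rw [H.ua p (by omega)] at g2
        simp at g2
      cases h6 : prevOcc u ABC.a p with
      | none => exact absurd (H.ua _ rfl) ((prevOcc_none_iff _ _ _).1 h6 (2 * n + 1) (by omega) hp)
      | some q => simp [Defined, evalR, evalFrom, stepR, startPos, h1, h3, h5, h6]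
  · have h5 : nextOcc v ABC.b (2 * n) = some (2 * n + 1) := by
      rw [nextOcc_some_iff]
      refine ⟨by omega, ?_, fun i g1 g2 => by omega⟩
      rw [H.vl _ (by omega) (by omega), if_pos (by omega)]
    have h6 := (prev_alt v (2 * n + 1) H.vl (2 * n + 1) (by omega)).1
    simp [Defined, evalR, evalFrom, stepR, startPos, h2, h4, h5, h6]

end

/-- Properties of `u_n` and `v_n` with respect to the rankers
`X_a Y_b X_c` and `X_a Y_c X_b Y_a`, and agreement on `uR^X_{3,n}`. -/
theorem statement19 (k : ℕ) (hk : 1 ≤ k) :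
    (Condensed (un k) [RLetter.X ABC.a, RLetter.Y ABC.b, RLetter.X ABC.c] ∧
     Defined (vn k) [RLetter.X ABC.a, RLetter.Y ABC.b, RLetter.X ABC.c] ∧
     ¬ Condensed (vn k) [RLetter.X ABC.a, RLetter.Y ABC.b, RLetter.X ABC.c]) ∧
    (∀ r, uRX 3 k r → (Defined (un k) r ↔ Defined (vn k) r)) ∧
    (Defined (un k) [RLetter.X ABC.a, RLetter.Y ABC.c, RLetter.X ABC.b, RLetter.Y ABC.a] ∧
     ¬ Defined (vn k) [RLetter.X ABC.a, RLetter.Y ABC.c, RLetter.X ABC.b, RLetter.Y ABC.a]) := by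
  have H := pair_unvn k hk
  exact ⟨⟨part1u H, part1v H⟩, agree H, part3 H⟩

end RankerPaper
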